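/- Let (X, T) be a dynamical system. The following statements are equivalent: (1) (X, T) is uniformly rigid; (2) (K(X), T_K) is uniformly rigid; (3) (𝔽₀(X), T_F) is uniformly rigid; (4) for every λ ∈ (0,1], (𝔽^{=λ}(X), T_F|_{𝔽^{=λ}(X)}) is uniformly rigid; (5) for every λ ∈ (0,1], (𝔽^{≥λ}(X), T_F|_{𝔽^{≥λ}(X)}) is uniformly rigid; (6) there exists λ ∈ (0,1] such that (𝔽^{=λ}(X), T_F|_{𝔽^{=λ}(X)}) is uniformly rigid; (7) there exists λ ∈ (0,1] such that (𝔽^{≥λ}(X), T_F|_{𝔽^{≥λ}(X)}) is uniformly rigid. -/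

import Mathlib

open Metric Set TopologicalSpace Filter Function
open scoped Classical

variable {X Y : Type*}

/-- Extended Hausdorff metric on subsets of `X`: the usual Hausdorff distance between
two nonempty sets (or two empty sets), and `diam X` when exactly one of them is empty. -/
noncomputable def eHd (X : Type*) [MetricSpace X] (A B : Set X) : ℝ :=
  if (A.Nonempty ∧ B.Nonempty) ∨ (A = ∅ ∧ B = ∅) then Metric.hausdorffDist A B
  else Metric.diam (Set.univ : Set X)

/-- The `α`-cut of a fuzzy set. -/
def cut (A : X → ℝ) (α : ℝ) : Set X := {x | α ≤ A x}

/-- The levelwise metric `d_∞` on fuzzy sets. -/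
noncomputable def dinf [MetricSpace X] (A B : X → ℝ) : ℝ :=
  sSup {r : ℝ | ∃ α ∈ Set.Ioc (0:ℝ) 1, r = eHd X (cut A α) (cut B α)}

/-- A fuzzy set: an upper semicontinuous function into `[0,1]`. -/
def IsFuzzy [TopologicalSpace X] (A : X → ℝ) : Prop :=
  (∀ x, A x ∈ Set.Icc (0:ℝ) 1) ∧ UpperSemicontinuous A

/-- `𝔽₀(X)`: nonempty (not identically zero) u.s.c. fuzzy sets. -/
def F0 (X : Type*) [TopologicalSpace X] : Set (X → ℝ) :=
  {A | IsFuzzy A ∧ ∃ x, A x ≠ 0}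

/-- `𝔽^{=λ}(X)`: u.s.c. fuzzy sets with maximum value `λ`. -/
def Feq (X : Type*) [TopologicalSpace X] (lam : ℝ) : Set (X → ℝ) :=
  {A | IsFuzzy A ∧ (∃ x, A x = lam) ∧ ∀ x, A x ≤ lam}

/-- `𝔽^{≥λ}(X)`: u.s.c. fuzzy sets attaining a value `≥ λ`. -/
def Fge (X : Type*) [TopologicalSpace X] (lam : ℝ) : Set (X → ℝ) :=
  {A | IsFuzzy A ∧ ∃ x, lam ≤ A x}

/-- Zadeh's extension of `T`. -/
noncomputable def zadeh (T : X → X) (A : X → ℝ) : X → ℝ :=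
  fun x => sSup (A '' (T ⁻¹' {x}))

/-- The induced map `T_K` on the hyperspace of nonempty closed (= compact) subsets. -/
def hyper [TopologicalSpace X] (T : X → X) (hT : Continuous T)
    (A : NonemptyCompacts X) : NonemptyCompacts X :=
  ⟨⟨T '' A, A.isCompact.image hT⟩, A.nonempty.image T⟩

/-- Topological transitivity. -/
def TopTrans [TopologicalSpace Y] (S : Y → Y) : Prop :=
  ∀ U V : Set Y, IsOpen U → IsOpen V → U.Nonempty → V.Nonempty →
    ∃ n : ℕ, (S^[n] '' U ∩ V).Nonempty

/-- Weak mixing: `S × S` is transitive. -/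
def TopWeakMix [TopologicalSpace Y] (S : Y → Y) : Prop :=
  TopTrans (fun p : Y × Y => (S p.1, S p.2))

/-- Topological transitivity of `S` restricted to `C`, for the topology induced by the
(pseudo)metric `ρ`, phrased via metric balls. -/
def TransOn (ρ : Y → Y → ℝ) (S : Y → Y) (C : Set Y) : Prop :=
  ∀ A ∈ C, ∀ B ∈ C, ∀ ε > 0, ∃ n : ℕ, ∃ E ∈ C, ρ E A < ε ∧ ρ (S^[n] E) B < ε

/-- Weak mixing of `S` restricted to `C`, phrased via metric balls. -/
def WeakMixOn (ρ : Y → Y → ℝ) (S : Y → Y) (C : Set Y) : Prop :=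
  ∀ A₁ ∈ C, ∀ A₂ ∈ C, ∀ B₁ ∈ C, ∀ B₂ ∈ C, ∀ ε > 0, ∃ n : ℕ,
    ∃ E₁ ∈ C, ∃ E₂ ∈ C, ρ E₁ A₁ < ε ∧ ρ E₂ A₂ < ε ∧
      ρ (S^[n] E₁) B₁ < ε ∧ ρ (S^[n] E₂) B₂ < ε


/-- Uniform rigidity of a self-map of a metric space. -/
def UnifRigidM {Z : Type*} [PseudoMetricSpace Z] (S : Z → Z) : Prop :=
  ∀ ε > 0, ∃ n : ℕ, 1 ≤ n ∧ ∀ y : Z, dist (S^[n] y) y < ε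

/-- Uniform rigidity of `S` restricted to `C`, with respect to the metric `ρ`. -/
def UnifRigidOn (ρ : Y → Y → ℝ) (S : Y → Y) (C : Set Y) : Prop :=
  ∀ ε > 0, ∃ n : ℕ, 1 ≤ n ∧ ∀ A ∈ C, ρ (S^[n] A) A < ε

/-!
Everything rests on the identity `[T_F^n A]_α = T^n [A]_α` for `α > 0`, which holds because the
supremum defining `T_F A` is attained on each nonempty fibre: a fibre is compact and `A` is upper
semicontinuous. If `T^n` moves every point by at most `r`, it moves every set by at most `r` in
the Hausdorff distance, hence every `α`-cut, hence every fuzzy set in `d_∞`. Conversely, singletons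
embed `X` isometrically into `K(X)`, and the fuzzy points of height `λ`, which have `{x}` as
`λ`-cut, recover the displacement of `x` under `T^n` from the displacement in `𝔽^{=λ}(X)`.
-/

section UniformRigidity

variable {Z : Type*} {ρ : Y → Y → ℝ} {S : Y → Y} {C : Set Y}

theorem unifRigidM_iff_unifRigidOn_univ [PseudoMetricSpace Y] :
    UnifRigidM S ↔ UnifRigidOn dist S univ := by
  simp only [UnifRigidM, UnifRigidOn, mem_univ, true_imp_iff]

theorem UnifRigidOn.of_forall_iterate_le {σ : Z → Z → ℝ} {R : Z → Z} {D : Set Z}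
    (h : UnifRigidOn ρ S C)
    (hle : ∀ (n : ℕ) (r : ℝ), 0 < r → (∀ y ∈ C, ρ (S^[n] y) y ≤ r) → ∀ z ∈ D, σ (R^[n] z) z ≤ r) :
    UnifRigidOn σ R D := by
  intro ε hε
  obtain ⟨n, hn, hlt⟩ := h (ε / 2) (half_pos hε)
  have hle_half := hle n (ε / 2) (half_pos hε) fun y hy => (hlt y hy).le
  exact ⟨n, hn, fun z hz => (hle_half z hz).trans_lt (half_lt_self hε)⟩

theorem UnifRigidOn.mono {D : Set Y} (h : UnifRigidOn ρ S C) (hDC : D ⊆ C) :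
    UnifRigidOn ρ S D :=
  h.of_forall_iterate_le fun _ _ _ hr y hy => hr y (hDC hy)

end UniformRigidity

theorem hausdorffDist_image_self_le [PseudoMetricSpace X] {S : X → X} {A : Set X} {r : ℝ}
    (hr : 0 ≤ r) (h : ∀ x ∈ A, dist (S x) x ≤ r) : hausdorffDist (S '' A) A ≤ r := by
  refine hausdorffDist_le_of_mem_dist hr ?_ fun x hx => ?_
  · rintro _ ⟨x, hx, rfl⟩
    exact ⟨x, hx, h x hx⟩
  · exact ⟨S x, mem_image_of_mem S hx, dist_comm x (S x) ▸ h x hx⟩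

section Hyperspace

theorem coe_hyper_iterate [TopologicalSpace X] {T : X → X} (hT : Continuous T) (n : ℕ)
    (K : NonemptyCompacts X) : ((hyper T hT)^[n] K : Set X) = T^[n] '' K := by
  have hsemi : Semiconj ((↑) : NonemptyCompacts X → Set X) (hyper T hT) (image T) := fun _ => rfl
  rw [image_iterate_eq]
  exact hsemi.iterate_right n K

theorem unifRigidM_hyper_iff [MetricSpace X] {T : X → X} (hT : Continuous T) :
    UnifRigidM (hyper T hT) ↔ UnifRigidM T := by
  simp only [unifRigidM_iff_unifRigidOn_univ]
  constructor <;> refine fun h => h.of_forall_iterate_le fun n r hr hle => ?_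
  · intro x _
    simpa [NonemptyCompacts.dist_eq, coe_hyper_iterate] using hle {x} (mem_univ _)
  · intro K _
    rw [NonemptyCompacts.dist_eq, coe_hyper_iterate]
    exact hausdorffDist_image_self_le hr.le fun x _ => hle x (mem_univ x)

end Hyperspace

section LevelwiseMetric

variable [MetricSpace X] {A B : X → ℝ} {r : ℝ}

theorem eHd_image_self (S : X → X) (K : Set X) : eHd X (S '' K) K = hausdorffDist (S '' K) K := by
  refine if_pos ?_
  rw [image_nonempty, image_eq_empty, and_self, and_self]
  exact K.eq_empty_or_nonempty.symm

theorem eHd_le_diam_univ [BoundedSpace X] (K L : Set X) : eHd X K L ≤ diam (univ : Set X) := by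
  unfold eHd
  split_ifs with h
  · rcases h with ⟨hK, hL⟩ | ⟨rfl, rfl⟩
    · calc
        hausdorffDist K L ≤ diam (K ∪ L) := hausdorffDist_le_diam hK (.all K) hL (.all L)
        _ ≤ diam univ := diam_mono (subset_univ _) (.all univ)
    · rw [hausdorffDist_empty]
      exact diam_nonneg
  · exact le_rfl

theorem dinf_le (hr : 0 ≤ r) (h : ∀ α ∈ Ioc (0 : ℝ) 1, eHd X (cut A α) (cut B α) ≤ r) :
    dinf A B ≤ r := by
  refine Real.sSup_le ?_ hr
  rintro _ ⟨α, hα, rfl⟩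
  exact h α hα

theorem eHd_cut_le_dinf [BoundedSpace X] (A B : X → ℝ) {α : ℝ} (hα : α ∈ Ioc (0 : ℝ) 1) :
    eHd X (cut A α) (cut B α) ≤ dinf A B := by
  refine le_csSup ⟨diam (univ : Set X), ?_⟩ ⟨α, hα, rfl⟩
  rintro _ ⟨β, -, rfl⟩
  exact eHd_le_diam_univ _ _

end LevelwiseMetric

section ZadehExtension

variable {T : X → X} {A : X → ℝ} {α : ℝ}

-- In `ℝ` this is the junk value `sSup ∅ = 0`; it is also the genuine supremum of `∅` in `[0,1]`,
-- which is the value Zadeh's extension takes off the range of `T`.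
theorem zadeh_eq_zero_of_notMem_range {x : X} (hx : x ∉ range T) : zadeh T A x = 0 := by
  rw [zadeh, preimage_singleton_eq_empty.2 hx, image_empty, Real.sSup_empty]

variable [TopologicalSpace X] [CompactSpace X]

theorem isGreatest_zadeh_apply [T1Space X] (hT : Continuous T) (hA : UpperSemicontinuous A)
    (x : X) : IsGreatest (A '' (T ⁻¹' {T x})) (zadeh T A (T x)) := by
  have hnonempty : (T ⁻¹' {T x}).Nonempty := ⟨x, rfl⟩
  have hcompact : IsCompact (T ⁻¹' {T x}) := (isClosed_singleton.preimage hT).isCompact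
  obtain ⟨y, hy, hmax⟩ := (hA.upperSemicontinuousOn _).exists_isMaxOn hnonempty hcompact
  have hgreatest : IsGreatest (A '' (T ⁻¹' {T x})) (A y) :=
    ⟨mem_image_of_mem A hy, forall_mem_image.2 hmax⟩
  rwa [zadeh, hgreatest.csSup_eq]

theorem cut_zadeh [T1Space X] (hT : Continuous T) (hA : UpperSemicontinuous A) (hα : 0 < α) :
    cut (zadeh T A) α = T '' cut A α := by
  refine Subset.antisymm (fun x hx => ?_) (image_subset_iff.2 fun y hy => ?_)
  · obtain ⟨z, rfl⟩ : x ∈ range T := by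
      by_contra hrange
      exact hα.not_ge (hx.trans_eq (zadeh_eq_zero_of_notMem_range hrange))
    obtain ⟨y, hy, hAy⟩ := (isGreatest_zadeh_apply hT hA z).1
    exact ⟨y, hx.trans_eq hAy.symm, hy⟩
  · exact hy.trans ((isGreatest_zadeh_apply hT hA y).2 ⟨y, rfl, rfl⟩)

theorem isFuzzy_zadeh [T2Space X] (hT : Continuous T) (hA : IsFuzzy A) : IsFuzzy (zadeh T A) := by
  have hnonneg (x : X) : 0 ≤ zadeh T A x :=
    Real.sSup_nonneg (forall_mem_image.2 fun y _ => (hA.1 y).1)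
  have hle_one (x : X) : zadeh T A x ≤ 1 :=
    Real.sSup_le (forall_mem_image.2 fun y _ => (hA.1 y).2) zero_le_one
  refine ⟨fun x => ⟨hnonneg x, hle_one x⟩, upperSemicontinuous_iff_isClosed_preimage.2 fun α => ?_⟩
  change IsClosed (cut (zadeh T A) α)
  rcases le_or_gt α 0 with hα | hα
  · have hcut : cut (zadeh T A) α = univ := eq_univ_of_forall fun x => hα.trans (hnonneg x)
    exact hcut ▸ isClosed_univ
  · rw [cut_zadeh hT hA.2 hα]
    exact ((hA.2.isClosed_preimage α).isCompact.image hT).isClosed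

theorem cut_zadeh_iterate [T2Space X] (hT : Continuous T) (hA : IsFuzzy A) (hα : 0 < α) (n : ℕ) :
    cut ((zadeh T)^[n] A) α = T^[n] '' cut A α := by
  induction n generalizing A with
  | zero => simp
  | succ n ih =>
    rw [iterate_succ_apply, ih (isFuzzy_zadeh hT hA), cut_zadeh hT hA.2 hα, iterate_succ,
      image_comp]

end ZadehExtension

section FuzzySpaces

variable {K : Set X} {lam : ℝ}

theorem cut_indicator_const {α : ℝ} (hα : 0 < α) (hle : α ≤ lam) :
    cut (K.indicator fun _ => lam) α = K := by
  ext x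
  by_cases hx : x ∈ K <;> simp [cut, hx, hα, hle]

variable [TopologicalSpace X]

theorem Feq_subset_Fge : Feq X lam ⊆ Fge X lam :=
  fun _ ⟨hA, ⟨x, hx⟩, _⟩ => ⟨hA, x, hx.ge⟩

theorem Feq_subset_F0 (hlam : lam ≠ 0) : Feq X lam ⊆ F0 X :=
  fun _ ⟨hA, ⟨x, hx⟩, _⟩ => ⟨hA, x, hx ▸ hlam⟩

theorem indicator_const_mem_Feq (hK : IsClosed K) (hne : K.Nonempty) (hlam : lam ∈ Icc (0 : ℝ) 1) :
    (K.indicator fun _ => lam) ∈ Feq X lam := by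
  have hle (x : X) : K.indicator (fun _ => lam) x ≤ lam :=
    indicator_apply_le' (fun _ => le_rfl) fun _ => hlam.1
  have hnonneg (x : X) : 0 ≤ K.indicator (fun _ => lam) x := indicator_nonneg (fun _ _ => hlam.1) x
  obtain ⟨x, hx⟩ := hne
  exact ⟨⟨fun y => ⟨hnonneg y, (hle y).trans hlam.2⟩, hK.upperSemicontinuous_indicator hlam.1⟩,
    ⟨x, indicator_of_mem hx _⟩, hle⟩

end FuzzySpaces

section FuzzyRigidity

variable [MetricSpace X] [CompactSpace X] {T : X → X}

theorem eHd_cut_zadeh_iterate (hT : Continuous T) {A : X → ℝ} (hA : IsFuzzy A) {α : ℝ} (hα : 0 < α)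
    (n : ℕ) :
    eHd X (cut ((zadeh T)^[n] A) α) (cut A α) = hausdorffDist (T^[n] '' cut A α) (cut A α) := by
  rw [cut_zadeh_iterate hT hA hα, eHd_image_self]

theorem UnifRigidM.unifRigidOn_zadeh (hT : Continuous T) (h : UnifRigidM T) :
    UnifRigidOn dinf (zadeh T) {A | IsFuzzy A} := by
  refine (unifRigidM_iff_unifRigidOn_univ.1 h).of_forall_iterate_le fun n r hr hle A hA => ?_
  refine dinf_le hr.le fun α hα => ?_
  rw [eHd_cut_zadeh_iterate hT hA hα.1]
  exact hausdorffDist_image_self_le hr.le fun x _ => hle x (mem_univ x)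

theorem dist_iterate_le_dinf_indicator_singleton (hT : Continuous T) {lam : ℝ}
    (hlam : lam ∈ Ioc (0 : ℝ) 1) (n : ℕ) (x : X) :
    dist (T^[n] x) x ≤
      dinf ((zadeh T)^[n] (indicator {x} fun _ => lam)) (indicator {x} fun _ => lam) := by
  have hfuzzy : IsFuzzy (indicator {x} fun _ => lam) :=
    (indicator_const_mem_Feq isClosed_singleton (singleton_nonempty x) (Ioc_subset_Icc_self hlam)).1
  have hle := eHd_cut_le_dinf ((zadeh T)^[n] (indicator {x} fun _ => lam))
    (indicator {x} fun _ => lam) hlam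
  rwa [eHd_cut_zadeh_iterate hT hfuzzy hlam.1, cut_indicator_const hlam.1 le_rfl, image_singleton,
    hausdorffDist_singleton] at hle

theorem UnifRigidOn.unifRigidM_of_Feq (hT : Continuous T) {lam : ℝ} (hlam : lam ∈ Ioc (0 : ℝ) 1)
    (h : UnifRigidOn dinf (zadeh T) (Feq X lam)) : UnifRigidM T := by
  refine unifRigidM_iff_unifRigidOn_univ.2 (h.of_forall_iterate_le fun n r _ hle x _ => ?_)
  exact (dist_iterate_le_dinf_indicator_singleton hT hlam n x).trans (hle _ <|
    indicator_const_mem_Feq isClosed_singleton (singleton_nonempty x) (Ioc_subset_Icc_self hlam))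

end FuzzyRigidity

theorem uniformlyRigid_tfae_general {X : Type*} [MetricSpace X] [CompactSpace X]
    (T : X → X) (hT : Continuous T) :
    List.TFAE
      [UnifRigidM T,
       UnifRigidM (hyper T hT),
       UnifRigidOn dinf (zadeh T) (F0 X),
       ∀ lam ∈ Ioc (0 : ℝ) 1, UnifRigidOn dinf (zadeh T) (Feq X lam),
       ∀ lam ∈ Ioc (0 : ℝ) 1, UnifRigidOn dinf (zadeh T) (Fge X lam),
       ∃ lam ∈ Ioc (0 : ℝ) 1, UnifRigidOn dinf (zadeh T) (Feq X lam),
       ∃ lam ∈ Ioc (0 : ℝ) 1, UnifRigidOn dinf (zadeh T) (Fge X lam)] := by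
  have one_mem : (1 : ℝ) ∈ Ioc (0 : ℝ) 1 := right_mem_Ioc.2 one_pos
  tfae_have 1 ↔ 2 := (unifRigidM_hyper_iff hT).symm
  tfae_have 1 → 3 := fun h => (h.unifRigidOn_zadeh hT).mono fun _ hA => hA.1
  tfae_have 1 → 5 := fun h _ _ => (h.unifRigidOn_zadeh hT).mono fun _ hA => hA.1
  tfae_have 5 → 4 := fun h lam hlam => (h lam hlam).mono Feq_subset_Fge
  tfae_have 4 → 6 := fun h => ⟨1, one_mem, h 1 one_mem⟩
  tfae_have 5 → 7 := fun h => ⟨1, one_mem, h 1 one_mem⟩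
  tfae_have 3 → 6 := fun h => ⟨1, one_mem, h.mono (Feq_subset_F0 one_ne_zero)⟩
  tfae_have 7 → 6 := fun ⟨lam, hlam, h⟩ => ⟨lam, hlam, h.mono Feq_subset_Fge⟩
  tfae_have 6 → 1 := fun ⟨_, hlam, h⟩ => h.unifRigidM_of_Feq hT hlam
  tfae_finish

/-- Uniform rigidity of `(X,T)`, of `(K(X), T_K)`, of the Zadeh extension on `𝔽₀(X)`,
and of the Zadeh extension on every (equivalently, some) `𝔽^{=λ}(X)` or `𝔽^{≥λ}(X)`
are all equivalent. -/
theorem uniformlyRigid_tfae {X : Type*} [MetricSpace X] [CompactSpace X] [Nontrivial X]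
    (T : X → X) (hT : Continuous T) (hTs : Function.Surjective T) :
    List.TFAE
      [UnifRigidM T,
       UnifRigidM (hyper T hT),
       UnifRigidOn dinf (zadeh T) (F0 X),
       ∀ lam ∈ Set.Ioc (0:ℝ) 1, UnifRigidOn dinf (zadeh T) (Feq X lam),
       ∀ lam ∈ Set.Ioc (0:ℝ) 1, UnifRigidOn dinf (zadeh T) (Fge X lam),
       ∃ lam ∈ Set.Ioc (0:ℝ) 1, UnifRigidOn dinf (zadeh T) (Feq X lam),
       ∃ lam ∈ Set.Ioc (0:ℝ) 1, UnifRigidOn dinf (zadeh T) (Fge X lam)] :=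
  uniformlyRigid_tfae_general T hT
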